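/- arXiv:1807.01272 — 3 statements merged into one kernel-verified Lean document; each statement's English description precedes it below -/
import Mathlib

section
/- Let F be a field, A ∈ F[x]^{m×n} a matrix with full row rank m (over F(x)), and v ∈ F[x]^{1×n} a row vector that does not belong to the F(x)-row space of A. Then the set of points α ∈ F for which there exists a vector w ∈ F^{1×m} with w·A(α) = v(α) is finite with cardinality at most m·max(1, deg(A)) + max(1, deg(v)). -/
open Polynomial Matrix

noncomputable section

variable {F : Type*} [Field F]

/-- Entrywise evaluation of a polynomial matrix at a point of `F`. -/
def matEval {m n : ℕ} (A : Matrix (Fin m) (Fin n) (Polynomial F)) (α : F) :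
    Matrix (Fin m) (Fin n) F :=
  A.map (Polynomial.eval α)

/-- `deg A`: the maximum of the degrees of the entries of `A`. -/
def matDeg {m n : ℕ} (A : Matrix (Fin m) (Fin n) (Polynomial F)) : ℕ :=
  Finset.univ.sup fun p : Fin m × Fin n => (A p.1 p.2).natDegree

/-- The rank of a polynomial matrix, i.e. its rank as a matrix over the
fraction field `F(x)` (represented by `RatFunc F`). -/
def polyRank {m n : ℕ} (A : Matrix (Fin m) (Fin n) (Polynomial F)) : ℕ :=
  (A.map (algebraMap (Polynomial F) (RatFunc F))).rank

/-- `deg v`: the maximum of the degrees of the entries of the vector `v`. -/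
def vecDeg {n : ℕ} (v : Fin n → Polynomial F) : ℕ :=
  Finset.univ.sup fun j => (v j).natDegree

/-!
Let `r` be the rank of `A` over `F(x)`. Bordering `r` independent rows of `A` by `v` gives a matrix
with independent rows, hence a nonzero `(r + 1)`-minor `d`, of degree at most `r · deg A + deg v`.
Evaluation does not increase the rank, so where `v(α)` lies in the row space of `A(α)`, the rank of
the bordered matrix at `α` is at most `r` and `d` vanishes: the solvable points are roots of `d`.
-/

section RowSpace

variable {ι κ R K : Type*} [CommRing R] [Field K]

theorem mem_span_row_iff_exists_vecMul_eq [Fintype ι] {M : Matrix ι κ R} {u : κ → R} :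
    u ∈ Submodule.span R (Set.range M.row) ↔ ∃ w : ι → R, w ᵥ* M = u := by
  rw [← range_vecMulLinear, LinearMap.mem_range]
  rfl

theorem exists_linearIndependent_row_comp [Finite ι] [Fintype κ] (M : Matrix ι κ K) :
    ∃ r : Fin M.rank → ι, LinearIndependent K (M.row ∘ r) ∧
      Submodule.span K (Set.range (M.row ∘ r)) = Submodule.span K (Set.range M.row) := by
  rw [M.rank_eq_finrank_span_row]
  obtain ⟨g, hmem, hspan, hg⟩ := Submodule.exists_fun_fin_finrank_span_eq K (Set.range M.row)
  choose r hr using hmem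
  obtain rfl : M.row ∘ r = g := funext hr
  exact ⟨r, hg, hspan⟩

theorem exists_det_submatrix_ne_zero [Fintype ι] [DecidableEq ι] [Finite κ] {M : Matrix ι κ K}
    (hM : LinearIndependent K M.row) : ∃ c : ι → κ, (M.submatrix id c).det ≠ 0 := by
  cases nonempty_fintype κ
  obtain ⟨c, hc, -⟩ := exists_linearIndependent_row_comp Mᵀ
  have hrank : Fintype.card ι = Mᵀ.rank := by rw [rank_transpose, hM.rank_matrix]
  let e : ι ≃ Fin Mᵀ.rank := Fintype.equivFinOfCardEq hrank
  have hcols : LinearIndependent K (M.submatrix id (c ∘ e)).col := hc.comp e e.injective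
  exact ⟨c ∘ e, ((isUnit_iff_isUnit_det _).1 (linearIndependent_cols_iff_isUnit.1 hcols)).ne_zero⟩

/-- A minor of `M` whose image under `φ` is nonzero is itself nonzero, and `ψ` keeps it nonzero. -/
theorem rank_map_le_rank_map_of_injective {L : Type*} [Field L] [Finite ι] [Fintype κ]
    (φ : R →+* L) {ψ : R →+* K} (hψ : Function.Injective ψ) (M : Matrix ι κ R) :
    (M.map φ).rank ≤ (M.map ψ).rank := by
  obtain ⟨r, hr, -⟩ := exists_linearIndependent_row_comp (M.map φ)
  obtain ⟨c, hc⟩ := exists_det_submatrix_ne_zero (M := (M.map φ).submatrix r id) hr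
  have hminor : (M.submatrix r c).det ≠ 0 :=
    ne_zero_of_map ((φ.map_det (M.submatrix r c)).trans_ne hc)
  have hminor_map : ((M.map ψ).submatrix r c).det ≠ 0 :=
    (ψ.map_det (M.submatrix r c)).symm.trans_ne ((map_ne_zero_iff ψ hψ).2 hminor)
  calc (M.map φ).rank = ((M.map ψ).submatrix r c).rank := by
        rw [rank_of_det_ne_zero hminor_map, Fintype.card_fin]
    _ ≤ (M.map ψ).rank := rank_submatrix_le _ r c

/-- The minor of the matrix obtained from `M` by adjoining the row `u` on top, on the row `u`, the
rows `r` of `M` and the columns `c`. -/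
def borderedMinor {k : ℕ} (M : Matrix ι κ R) (u : κ → R) (r : Fin k → ι) (c : Fin (k + 1) → κ) :
    R :=
  ((Matrix.of (Fin.cons u (M.row ∘ r))).submatrix id c).det

theorem map_borderedMinor {S : Type*} [CommRing S] (φ : R →+* S) {k : ℕ} (M : Matrix ι κ R)
    (u : κ → R) (r : Fin k → ι) (c : Fin (k + 1) → κ) :
    φ (borderedMinor M u r c) = borderedMinor (M.map φ) (φ ∘ u) r c := by
  rw [borderedMinor, φ.map_det, borderedMinor]
  congr 1
  ext i j
  cases i using Fin.cases <;> rfl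

theorem exists_borderedMinor_ne_zero [Finite ι] [Fintype κ] {M : Matrix ι κ K} {u : κ → K}
    (hu : u ∉ Submodule.span K (Set.range M.row)) :
    ∃ (r : Fin M.rank → ι) (c : Fin (M.rank + 1) → κ), borderedMinor M u r c ≠ 0 := by
  obtain ⟨r, hr, hspan⟩ := exists_linearIndependent_row_comp M
  have hrows : LinearIndependent K (Fin.cons u (M.row ∘ r) : Fin (M.rank + 1) → κ → K) :=
    linearIndependent_finCons.2 ⟨hr, hspan ▸ hu⟩
  exact ⟨r, exists_det_submatrix_ne_zero (M := Matrix.of _) hrows⟩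

theorem borderedMinor_eq_zero_of_mem_span_row [Finite ι] [Fintype κ] {M : Matrix ι κ K}
    {u : κ → K} (hu : u ∈ Submodule.span K (Set.range M.row)) {k : ℕ} (hk : M.rank ≤ k)
    (r : Fin k → ι) (c : Fin (k + 1) → κ) : borderedMinor M u r c = 0 := by
  by_contra hminor
  let N : Matrix (Fin (k + 1)) κ K := Matrix.of (Fin.cons u (M.row ∘ r))
  have hrows : Set.range N.row ⊆ Submodule.span K (Set.range M.row) := by
    rintro _ ⟨i, rfl⟩
    cases i using Fin.cases with
    | zero => exact hu
    | succ i => exact Submodule.subset_span ⟨r i, rfl⟩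
  have : k + 1 ≤ k := calc
    k + 1 = (N.submatrix id c).rank := by rw [rank_of_det_ne_zero hminor, Fintype.card_fin]
    _ ≤ N.rank := rank_submatrix_le N id c
    _ ≤ M.rank := by
      rw [N.rank_eq_finrank_span_row, M.rank_eq_finrank_span_row]
      exact Submodule.finrank_mono (Submodule.span_le.2 hrows)
    _ ≤ k := hk
  omega

end RowSpace

section Degree

theorem natDegree_det_le_sum {ι R : Type*} [Fintype ι] [DecidableEq ι] [CommRing R]
    {M : Matrix ι ι R[X]} {d : ι → ℕ} (hM : ∀ i j, (M i j).natDegree ≤ d i) :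
    M.det.natDegree ≤ ∑ i, d i := by
  rw [← det_transpose, det_apply]
  refine natDegree_sum_le_of_forall_le _ _ fun σ _ => ?_
  calc (Equiv.Perm.sign σ • ∏ i, Mᵀ (σ i) i).natDegree
      ≤ (∏ i, Mᵀ (σ i) i).natDegree := natDegree_smul_le _ _
    _ ≤ ∑ i, (M i (σ i)).natDegree := natDegree_prod_le _ _
    _ ≤ ∑ i, d i := Finset.sum_le_sum fun i _ => hM i (σ i)

variable {m n : ℕ}

theorem natDegree_le_matDeg (A : Matrix (Fin m) (Fin n) F[X]) (i : Fin m) (j : Fin n) :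
    (A i j).natDegree ≤ matDeg A :=
  Finset.le_sup (f := fun p : Fin m × Fin n => (A p.1 p.2).natDegree) (Finset.mem_univ (i, j))

theorem natDegree_le_vecDeg (v : Fin n → F[X]) (j : Fin n) : (v j).natDegree ≤ vecDeg v :=
  Finset.le_sup (f := fun j => (v j).natDegree) (Finset.mem_univ j)

theorem natDegree_borderedMinor_le {k : ℕ} (A : Matrix (Fin m) (Fin n) F[X]) (v : Fin n → F[X])
    (r : Fin k → Fin m) (c : Fin (k + 1) → Fin n) :
    (borderedMinor A v r c).natDegree ≤ k * matDeg A + vecDeg v := by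
  let d : Fin (k + 1) → ℕ := Fin.cons (vecDeg v) fun _ => matDeg A
  calc (borderedMinor A v r c).natDegree ≤ ∑ i, d i := by
        refine natDegree_det_le_sum fun i j => ?_
        cases i using Fin.cases with
        | zero => exact natDegree_le_vecDeg v (c j)
        | succ i => exact natDegree_le_matDeg A (r i) (c j)
    _ = k * matDeg A + vecDeg v := by simp [d, Fin.sum_univ_succ, add_comm]

end Degree

theorem rank_matEval_le_polyRank {m n : ℕ} (A : Matrix (Fin m) (Fin n) F[X]) (α : F) :
    (matEval A α).rank ≤ polyRank A :=
  rank_map_le_rank_map_of_injective (evalRingHom α) (RatFunc.algebraMap_injective F) A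

theorem eval_solvable_points_finite_general {m n : ℕ} (A : Matrix (Fin m) (Fin n) F[X])
    (v : Fin n → F[X])
    (hv : ¬ ∃ p : Fin m → RatFunc F,
      p ᵥ* A.map (algebraMap F[X] (RatFunc F)) = fun j => algebraMap F[X] (RatFunc F) (v j)) :
    {α : F | ∃ w : Fin m → F, w ᵥ* matEval A α = fun j => (v j).eval α}.Finite ∧
      {α : F | ∃ w : Fin m → F, w ᵥ* matEval A α = fun j => (v j).eval α}.ncard
        ≤ polyRank A * matDeg A + vecDeg v := by
  obtain ⟨r, c, hminor⟩ := exists_borderedMinor_ne_zero (mt mem_span_row_iff_exists_vecMul_eq.1 hv)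
  let d : F[X] := borderedMinor A v r c
  have hd : d ≠ 0 :=
    ne_zero_of_map ((map_borderedMinor (algebraMap F[X] (RatFunc F)) A v r c).trans_ne hminor)
  have hsub : {α : F | ∃ w : Fin m → F, w ᵥ* matEval A α = fun j => (v j).eval α} ⊆
      d.rootSet F := fun α hα => by
    rw [mem_rootSet_of_ne hd, coe_aeval_eq_eval, ← coe_evalRingHom, map_borderedMinor]
    exact borderedMinor_eq_zero_of_mem_span_row (mem_span_row_iff_exists_vecMul_eq.2 hα)
      (rank_matEval_le_polyRank A α) r c
  exact ⟨(d.rootSet_finite F).subset hsub, calc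
    _ ≤ (d.rootSet F).ncard := Set.ncard_le_ncard hsub (d.rootSet_finite F)
    _ ≤ d.natDegree := d.ncard_rootSet_le F
    _ ≤ polyRank A * matDeg A + vecDeg v := natDegree_borderedMinor_le A v r c⟩

/-- if `A` has full row rank `m` and `v` is not in the
`F(x)`-row space of `A`, then the set of `α ∈ F` for which the evaluated
system `w·A(α) = v(α)` has a solution `w ∈ F^{1×m}` is finite with at most
`m·max(1, deg A) + max(1, deg v)` elements. -/
theorem eval_solvable_points_finite {m n : ℕ}
    (A : Matrix (Fin m) (Fin n) (Polynomial F))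
    (hrank : polyRank A = m)
    (v : Fin n → Polynomial F)
    (hv : ¬ ∃ p : Fin m → RatFunc F,
        p ᵥ* (A.map (algebraMap (Polynomial F) (RatFunc F)))
          = fun j => algebraMap (Polynomial F) (RatFunc F) (v j)) :
    {α : F | ∃ w : Fin m → F, w ᵥ* (matEval A α) = fun j => (v j).eval α}.Finite ∧
      {α : F | ∃ w : Fin m → F, w ᵥ* (matEval A α) = fun j => (v j).eval α}.ncard
        ≤ m * max 1 (matDeg A) + max 1 (vecDeg v) := by
  obtain ⟨hfinite, hcard⟩ := eval_solvable_points_finite_general A v hv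
  exact ⟨hfinite, hcard.trans (by rw [hrank]; gcongr <;> exact le_max_right _ _)⟩
end
end

section
/- Let F be a field, A ∈ F[x]^{m×n}, and B ∈ F[x]^{ℓ×n}. Then B is a saturation basis of A (i.e., the rows of B form an F[x]-basis of satur(A)) if and only if the following three conditions hold: (i) rowsp_{F[x]}(A) ⊆ rowsp_{F[x]}(B); (ii) rank(B) = ℓ and rank(A) ≥ ℓ; (iii) B is saturated. -/
/-!
Every row of `A` lies in the saturation of `B` exactly when the row space of `A` over the fraction
field is contained in that of `B`. Inclusions of saturations are thus inclusions of
finite-dimensional vector spaces, where `rank B ≤ rank A` turns an inclusion into an equality.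
All that matters about `F[x]` and `F(x)` is that the latter is the fraction field of the former.
-/

open Polynomial Matrix

noncomputable section

variable {F : Type*} [Field F]

/-- The `F[x]`-row space of `A`, as a set: `{p·A : p ∈ F[x]^{1×m}}`. -/
def rowSpanPoly {m n : ℕ} (A : Matrix (Fin m) (Fin n) (Polynomial F)) :
    Set (Fin n → Polynomial F) :=
  {v | ∃ p : Fin m → Polynomial F, p ᵥ* A = v}

/-- The saturation of `A`: the polynomial vectors lying in the
`F(x)`-row space of `A`. -/
def satur {m n : ℕ} (A : Matrix (Fin m) (Fin n) (Polynomial F)) :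
    Set (Fin n → Polynomial F) :=
  {v | ∃ p : Fin m → RatFunc F,
      p ᵥ* (A.map (algebraMap (Polynomial F) (RatFunc F)))
        = fun j => algebraMap (Polynomial F) (RatFunc F) (v j)}

/-- `A` is saturated when its saturation equals its `F[x]`-row space. -/
def IsSaturated {m n : ℕ} (A : Matrix (Fin m) (Fin n) (Polynomial F)) : Prop :=
  satur A = rowSpanPoly A

section RowSpace

variable {R m n : Type*} [Fintype m]

/-- The row space `{p ᵥ* A}` of a matrix, as a submodule: over `F[x]` this is `rowSpanPoly`, and for
the image of `A` in the fraction field it is the `F(x)`-row space of `A`. -/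
def rowSpace [Semiring R] (A : Matrix m n R) : Submodule R (n → R) :=
  LinearMap.range A.vecMulLinear

theorem rowSpace_le_iff [Semiring R] {A : Matrix m n R} {N : Submodule R (n → R)} :
    rowSpace A ≤ N ↔ ∀ i, A.row i ∈ N := by
  rw [rowSpace, range_vecMulLinear, Submodule.span_le, Set.range_subset_iff]
  rfl

theorem finrank_rowSpace [Field R] [Fintype n] (A : Matrix m n R) :
    Module.finrank R (rowSpace A) = A.rank := by
  rw [rowSpace, range_vecMulLinear, A.rank_eq_finrank_span_row]

theorem linearIndependent_row_iff_rank_eq_card [Field R] [Fintype n] {A : Matrix m n R} :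
    LinearIndependent R A.row ↔ A.rank = Fintype.card m := by
  rw [linearIndependent_iff_card_eq_finrank_span, A.rank_eq_finrank_span_row, Set.finrank, eq_comm]

end RowSpace

theorem linearIndependent_row_map_algebraMap_iff {R K m n : Type*} [CommRing R] [CommRing K]
    [Algebra R K] [IsFractionRing R K] {A : Matrix m n R} :
    LinearIndependent K (A.map (algebraMap R K)).row ↔ LinearIndependent R A.row := by
  rw [← LinearIndependent.iff_fractionRing R K]
  refine ((Algebra.linearMap R K).compLeft n).linearIndependent_iff (LinearMap.ker_eq_bot.2 ?_)
  exact (IsFractionRing.injective R K).comp_left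

section Saturation

variable {R l m n : Type*} (K : Type*) [Fintype l] [Fintype m] [CommSemiring R] [Semiring K]
  [Algebra R K]

/-- The saturation of `A` along `R → K`: the vectors over `R` that lie in the row space of `A` over
`K`. It is `satur` when `R = F[x]` and `K = F(x)`. -/
def saturation (A : Matrix m n R) : Submodule R (n → R) :=
  ((rowSpace (A.map (algebraMap R K))).restrictScalars R).comap
    ((Algebra.linearMap R K).compLeft n)

variable {K} {A : Matrix m n R} {B : Matrix l n R}

theorem rowSpace_map_le_iff :
    rowSpace (A.map (algebraMap R K)) ≤ rowSpace (B.map (algebraMap R K)) ↔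
      rowSpace A ≤ saturation K B := by
  rw [rowSpace_le_iff, rowSpace_le_iff]
  rfl

theorem rowSpace_le_saturation : rowSpace A ≤ saturation K A :=
  rowSpace_map_le_iff.1 le_rfl

theorem saturation_le_saturation (h : rowSpace A ≤ saturation K B) :
    saturation K A ≤ saturation K B :=
  Submodule.comap_mono (rowSpace_map_le_iff.2 h)

end Saturation

section FractionField

variable {R K l m n : Type*} [Fintype l] [Fintype m] [Fintype n] [CommRing R] [Field K]
  [Algebra R K] {A : Matrix m n R} {B : Matrix l n R}

theorem rank_map_le_of_rowSpace_le_saturation (h : rowSpace A ≤ saturation K B) :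
    (A.map (algebraMap R K)).rank ≤ (B.map (algebraMap R K)).rank := by
  rw [← finrank_rowSpace, ← finrank_rowSpace]
  exact Submodule.finrank_mono (rowSpace_map_le_iff.2 h)

theorem saturation_eq_saturation_of_rank_le (h : rowSpace A ≤ saturation K B)
    (hrank : (B.map (algebraMap R K)).rank ≤ (A.map (algebraMap R K)).rank) :
    saturation K A = saturation K B := by
  rw [← finrank_rowSpace, ← finrank_rowSpace] at hrank
  rw [saturation, saturation,
    Submodule.eq_of_le_of_finrank_le (rowSpace_map_le_iff.2 h) hrank]

theorem saturation_eq_rowSpace_iff :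
    saturation K A = rowSpace B ↔
      rowSpace A ≤ rowSpace B ∧
        (B.map (algebraMap R K)).rank ≤ (A.map (algebraMap R K)).rank ∧
        saturation K B = rowSpace B := by
  constructor
  · intro h
    refine ⟨h ▸ rowSpace_le_saturation, rank_map_le_of_rowSpace_le_saturation h.ge, ?_⟩
    exact ((saturation_le_saturation h.ge).trans h.le).antisymm rowSpace_le_saturation
  · rintro ⟨hle, hrank, hB⟩
    exact (saturation_eq_saturation_of_rank_le (hle.trans hB.ge) hrank).trans hB

variable (K A B) in
theorem saturation_basis_iff_general [IsFractionRing R K] :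
    LinearIndependent R B.row ∧ saturation K A = rowSpace B ↔
      rowSpace A ≤ rowSpace B ∧
        ((B.map (algebraMap R K)).rank = Fintype.card l ∧
          Fintype.card l ≤ (A.map (algebraMap R K)).rank) ∧
        saturation K B = rowSpace B := by
  rw [← linearIndependent_row_map_algebraMap_iff (K := K),
    linearIndependent_row_iff_rank_eq_card, saturation_eq_rowSpace_iff]
  grind

end FractionField

theorem coe_rowSpace {m n : ℕ} (A : Matrix (Fin m) (Fin n) F[X]) :
    (rowSpace A : Set (Fin n → F[X])) = rowSpanPoly A :=
  rfl

theorem coe_saturation {m n : ℕ} (A : Matrix (Fin m) (Fin n) F[X]) :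
    (saturation (RatFunc F) A : Set (Fin n → F[X])) = satur A :=
  rfl

/-- `B` is a saturation basis of `A` (its rows form an
`F[x]`-basis of `satur(A)`) if and only if (i) `rowsp(A) ⊆ rowsp(B)`,
(ii) `rank(B) = ℓ` and `rank(A) ≥ ℓ`, and (iii) `B` is saturated. -/
theorem saturation_basis_iff {m n ℓ : ℕ}
    (A : Matrix (Fin m) (Fin n) (Polynomial F))
    (B : Matrix (Fin ℓ) (Fin n) (Polynomial F)) :
    (LinearIndependent (Polynomial F) (fun i : Fin ℓ => B i) ∧
        ∀ v : Fin n → Polynomial F,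
          v ∈ satur A ↔ ∃ p : Fin ℓ → Polynomial F, p ᵥ* B = v) ↔
      (rowSpanPoly A ⊆ rowSpanPoly B ∧
        (polyRank B = ℓ ∧ ℓ ≤ polyRank A) ∧
        IsSaturated B) := by
  simpa only [SetLike.ext'_iff, ← SetLike.coe_subset_coe, coe_saturation, coe_rowSpace,
    Fintype.card_fin, Set.ext_iff (a := satur A)]
    using! saturation_basis_iff_general (RatFunc F) A B
end
end

section
/- Let F be a field, A ∈ F[x]^{m×n}, and B ∈ F[x]^{ℓ×m}. Then B is a left kernel basis of A (i.e., the rows of B form an F[x]-basis of {p ∈ F[x]^{1×m} : p·A = 0}) if and only if the following conditions hold: (i) rank(B) = ℓ and rank(A) ≥ m − ℓ; (ii) B·A = 0; (iii) B is saturated. -/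
open Polynomial Matrix

noncomputable section

variable {F : Type*} [Field F]

/-!
Let `K` be the fraction field of `R`. Clearing denominators shows that a subspace `U` of `K^m` is
determined by its contraction `U ∩ R^m`. The left kernel of `A` over `R` is the contraction of its
left kernel over `K`, and the saturation of `B` is the contraction of its row space over `K`. Hence
`R^l → R^m → R^n`, given by `B` and `A`, is exact iff it is exact over `K` and `B` is saturated;
exactness over `K` is decided by counting dimensions.
-/

section Contraction

variable {ι R K : Type*} [CommSemiring R] [CommSemiring K] [Algebra R K]

/-- The contraction `U ∩ R^ι` to `R^ι` of a `K`-submodule `U` of `K^ι`. It is written as a comap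
along the product of the maps `R → K` because this is the form of `IsLocalizedModule.pi`. -/
def contraction (R : Type*) {ι K : Type*} [CommSemiring R] [CommSemiring K] [Algebra R K]
    (U : Submodule K (ι → K)) : Submodule R (ι → R) :=
  (U.restrictScalars R).comap (.pi fun i ↦ Algebra.linearMap R K ∘ₗ .proj i)

theorem mem_contraction {U : Submodule K (ι → K)} {v : ι → R} :
    v ∈ contraction R U ↔ algebraMap R K ∘ v ∈ U :=
  Iff.rfl

theorem contraction_le_contraction_iff (S : Submonoid R) [IsLocalization S K] [Finite ι]
    {U V : Submodule K (ι → K)} : contraction R U ≤ contraction R V ↔ U ≤ V :=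
  (Submodule.localized'gi K S _).u_le_u_iff

end Contraction

theorem range_vecMulLinear_le_ker_iff_mul_eq_zero {l m n R : Type*} [Semiring R] [Fintype l]
    [Fintype m] {M : Matrix l m R} {N : Matrix m n R} :
    LinearMap.range M.vecMulLinear ≤ LinearMap.ker N.vecMulLinear ↔ M * N = 0 := by
  classical
  rw [LinearMap.range_le_ker_iff, ← (Matrix.toLinearMapRight' (R := R)).map_eq_zero_iff,
    Matrix.toLinearMapRight'_mul]
  rfl

section Rank

variable {l m n K : Type*} [Field K] [Fintype l] [Fintype m] [Fintype n]

theorem finrank_range_vecMulLinear (M : Matrix l m K) :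
    Module.finrank K (LinearMap.range M.vecMulLinear) = M.rank := by
  rw [range_vecMulLinear, M.rank_eq_finrank_span_row]

theorem rank_add_finrank_ker_vecMulLinear (M : Matrix l m K) :
    M.rank + Module.finrank K (LinearMap.ker M.vecMulLinear) = Fintype.card l := by
  rw [← finrank_range_vecMulLinear, LinearMap.finrank_range_add_finrank_ker,
    Module.finrank_fintype_fun_eq_card]

theorem linearIndependent_row_iff_rank_eq_card_s17 {M : Matrix l m K} :
    LinearIndependent K M.row ↔ M.rank = Fintype.card l := by
  rw [linearIndependent_iff_card_eq_finrank_span, M.rank_eq_finrank_span_row, eq_comm, Set.finrank]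

theorem range_vecMulLinear_eq_ker_iff_card_le_rank_add_rank {M : Matrix l m K} {N : Matrix m n K} :
    LinearMap.range M.vecMulLinear = LinearMap.ker N.vecMulLinear ↔
      M * N = 0 ∧ Fintype.card m ≤ M.rank + N.rank := by
  rw [← range_vecMulLinear_le_ker_iff_mul_eq_zero, ← rank_add_finrank_ker_vecMulLinear N, add_comm,
    Nat.add_le_add_iff_right, ← finrank_range_vecMulLinear]
  exact ⟨fun h ↦ ⟨h.le, h ▸ le_rfl⟩, fun h ↦ Submodule.eq_of_le_of_finrank_le h.1 h.2⟩

end Rank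

section Saturation

variable {l m n R K : Type*} [CommSemiring R] [CommSemiring K] [Algebra R K]

/-- The saturation of the row space of `B`: the vectors over `R` in the row space of `B` over
`K`, where `K` stands for the fraction field of `R`. -/
def rowSaturation (K : Type*) {l m R : Type*} [CommSemiring R] [CommSemiring K] [Algebra R K]
    [Fintype l] (B : Matrix l m R) : Submodule R (m → R) :=
  contraction R (LinearMap.range (B.map (algebraMap R K)).vecMulLinear)

theorem algebraMap_comp_vecMul [Fintype l] (v : l → R) (B : Matrix l m R) :
    algebraMap R K ∘ (v ᵥ* B) = (algebraMap R K ∘ v) ᵥ* B.map (algebraMap R K) :=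
  funext ((algebraMap R K).map_vecMul B v)

theorem range_vecMulLinear_le_rowSaturation [Fintype l] (B : Matrix l m R) :
    LinearMap.range B.vecMulLinear ≤ rowSaturation K B := by
  rintro _ ⟨v, rfl⟩
  exact ⟨algebraMap R K ∘ v, (algebraMap_comp_vecMul v B).symm⟩

theorem map_algebraMap_mul_eq_zero_iff [FaithfulSMul R K] [Fintype m] {B : Matrix l m R}
    {A : Matrix m n R} :
    B.map (algebraMap R K) * A.map (algebraMap R K) = 0 ↔ B * A = 0 := by
  rw [← Matrix.map_mul]
  exact (Matrix.map_injective (FaithfulSMul.algebraMap_injective R K)).eq_iff'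
    (Matrix.map_zero _ (map_zero _))

theorem contraction_ker_vecMulLinear [FaithfulSMul R K] [Fintype m] (A : Matrix m n R) :
    contraction R (LinearMap.ker (A.map (algebraMap R K)).vecMulLinear) =
      LinearMap.ker A.vecMulLinear := by
  ext v
  rw [mem_contraction, LinearMap.mem_ker, LinearMap.mem_ker, Matrix.vecMulLinear_apply,
    Matrix.vecMulLinear_apply, ← algebraMap_comp_vecMul]
  simp [funext_iff]

end Saturation

section FractionRing

variable {l m n R K : Type*} [CommRing R] [Fintype l] [Fintype m]

theorem range_vecMulLinear_eq_ker_iff_rowSaturation_eq [CommRing K] [Algebra R K]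
    [IsFractionRing R K] {B : Matrix l m R} {A : Matrix m n R} :
    LinearMap.range B.vecMulLinear = LinearMap.ker A.vecMulLinear ↔
      LinearMap.range (B.map (algebraMap R K)).vecMulLinear =
          LinearMap.ker (A.map (algebraMap R K)).vecMulLinear ∧
        rowSaturation K B = LinearMap.range B.vecMulLinear := by
  have ker_eq := contraction_ker_vecMulLinear (K := K) A
  refine ⟨fun h ↦ ?_, fun ⟨h, saturated⟩ ↦ ?_⟩
  · have range_le : LinearMap.range (B.map (algebraMap R K)).vecMulLinear ≤
        LinearMap.ker (A.map (algebraMap R K)).vecMulLinear := by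
      rw [range_vecMulLinear_le_ker_iff_mul_eq_zero, map_algebraMap_mul_eq_zero_iff,
        ← range_vecMulLinear_le_ker_iff_mul_eq_zero]
      exact h.le
    have ker_le : LinearMap.ker (A.map (algebraMap R K)).vecMulLinear ≤
        LinearMap.range (B.map (algebraMap R K)).vecMulLinear := by
      rw [← contraction_le_contraction_iff (nonZeroDivisors R), ker_eq, ← h]
      exact range_vecMulLinear_le_rowSaturation B
    have range_eq := range_le.antisymm ker_le
    exact ⟨range_eq, by rw [rowSaturation, range_eq, ker_eq, h]⟩
  · rw [← saturated, rowSaturation, h, ker_eq]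

variable [Field K] [Algebra R K] [IsFractionRing R K]

theorem linearIndependent_row_iff_rank_map_eq_card {B : Matrix l m R} :
    LinearIndependent R B.row ↔ (B.map (algebraMap R K)).rank = Fintype.card l := by
  rw [← linearIndependent_row_iff_rank_eq_card_s17, ← LinearIndependent.iff_fractionRing R K]
  exact (((Algebra.linearMap R K).compLeft m).linearIndependent_iff_of_injOn
    (FaithfulSMul.algebraMap_injective R K).comp_left.injOn).symm

variable (K) in
theorem kernel_basis_iff_general [Fintype n] (A : Matrix m n R) (B : Matrix l m R) :
    (LinearIndependent R B.row ∧ LinearMap.ker A.vecMulLinear = LinearMap.range B.vecMulLinear) ↔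
      ((B.map (algebraMap R K)).rank = Fintype.card l ∧
          Fintype.card m - Fintype.card l ≤ (A.map (algebraMap R K)).rank) ∧
        B * A = 0 ∧ rowSaturation K B = LinearMap.range B.vecMulLinear := by
  rw [linearIndependent_row_iff_rank_map_eq_card (K := K), and_assoc]
  refine and_congr_right fun rank_eq ↦ ?_
  rw [eq_comm, range_vecMulLinear_eq_ker_iff_rowSaturation_eq (K := K),
    range_vecMulLinear_eq_ker_iff_card_le_rank_add_rank, map_algebraMap_mul_eq_zero_iff, rank_eq,
    tsub_le_iff_left, and_assoc, and_left_comm]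

end FractionRing

theorem isSaturated_iff_rowSaturation_eq {m n : ℕ} {B : Matrix (Fin m) (Fin n) (Polynomial F)} :
    IsSaturated B ↔ rowSaturation (RatFunc F) B = LinearMap.range B.vecMulLinear := by
  rw [← SetLike.coe_set_eq]
  rfl

/-- `B` is a left kernel basis of `A` (its rows form an
`F[x]`-basis of `{p : p·A = 0}`) if and only if (i) `rank(B) = ℓ` and
`rank(A) ≥ m − ℓ`, (ii) `B·A = 0`, and (iii) `B` is saturated. -/
theorem kernel_basis_iff {m n ℓ : ℕ}
    (A : Matrix (Fin m) (Fin n) (Polynomial F))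
    (B : Matrix (Fin ℓ) (Fin m) (Polynomial F)) :
    (LinearIndependent (Polynomial F) (fun i : Fin ℓ => B i) ∧
        ∀ p : Fin m → Polynomial F,
          p ᵥ* A = 0 ↔ ∃ q : Fin ℓ → Polynomial F, q ᵥ* B = p) ↔
      ((polyRank B = ℓ ∧ m - ℓ ≤ polyRank A) ∧
        B * A = 0 ∧
        IsSaturated B) := by
  simpa [polyRank, isSaturated_iff_rowSaturation_eq, Matrix.row_def, SetLike.ext_iff] using
    kernel_basis_iff_general (RatFunc F) A B
end
end
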